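/- arXiv:1506.04036 — 3 statements merged into one kernel-verified Lean document; each statement's English description precedes it below -/
import Mathlib

section
/- For every F_{q^m}-linear code C ⊆ F_{q^m}^n of dimension k and every 1 ≤ r ≤ k − 1, one has 1 ≤ d_{R,r+1}(C) − d_{R,r}(C) ≤ m. -/
open Submodule Module

namespace RankPaper

variable {n : ℕ}

/-- The coordinatewise `q^i`-th power map on `Fqm^n`. -/
def qpowMap (q i : ℕ) {Fqm : Type} [Field Fqm] (v : Fin n → Fqm) : Fin n → Fqm :=
  fun j => v j ^ q ^ i

/-- The Galois closure `D* = Σ_{i=0}^{m-1} D^{q^i}` of a subspace (as the span of the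
union of the images of `D` under the coordinatewise `q^i`-power maps, `0 ≤ i < m`). -/
def galClosure (q m : ℕ) {Fqm : Type} [Field Fqm] (D : Submodule Fqm (Fin n → Fqm)) :
    Submodule Fqm (Fin n → Fqm) :=
  Submodule.span Fqm (⋃ i ∈ Finset.range m, qpowMap q i '' (D : Set (Fin n → Fqm)))

/-- `D` is Galois closed if `D = D*`. -/
def GaloisClosed (q m : ℕ) {Fqm : Type} [Field Fqm] (D : Submodule Fqm (Fin n → Fqm)) : Prop :=
  galClosure q m D = D

/-- Rank weight of a subspace: `wt_R(D) = dim_{Fqm} D*`. -/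
noncomputable def wtR (q m : ℕ) {Fqm : Type} [Field Fqm]
    (D : Submodule Fqm (Fin n → Fqm)) : ℕ :=
  finrank Fqm (galClosure q m D)

/-- Rank weight of a vector: `wt_R(c) = wt_R(span {c})`. -/
noncomputable def wtRv (q m : ℕ) {Fqm : Type} [Field Fqm] (c : Fin n → Fqm) : ℕ :=
  wtR q m (Submodule.span Fqm ({c} : Set (Fin n → Fqm)))

/-- Hamming weight of a subspace: the number of coordinates where some element is nonzero. -/
noncomputable def wtH {Fqm : Type} [Field Fqm] (D : Submodule Fqm (Fin n → Fqm)) : ℕ :=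
  {i : Fin n | ∃ d ∈ D, d i ≠ 0}.ncard

/-- `r`-th generalized rank weight of a linear code. -/
noncomputable def dR (q m : ℕ) {Fqm : Type} [Field Fqm]
    (C : Submodule Fqm (Fin n → Fqm)) (r : ℕ) : ℕ :=
  sInf { dv | ∃ V : Submodule Fqm (Fin n → Fqm),
    GaloisClosed q m V ∧ r ≤ finrank Fqm ↥(C ⊓ V) ∧ dv = finrank Fqm ↥V }

/-- `r`-th generalized Hamming weight of a linear code. -/
noncomputable def dH {Fqm : Type} [Field Fqm]
    (C : Submodule Fqm (Fin n → Fqm)) (r : ℕ) : ℕ :=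
  sInf { w | ∃ D : Submodule Fqm (Fin n → Fqm), D ≤ C ∧ finrank Fqm ↥D = r ∧ w = wtH D }

/-- `r`-th relative generalized rank weight of a nested code pair. -/
noncomputable def MR (q m : ℕ) {Fqm : Type} [Field Fqm]
    (C₁ C₂ : Submodule Fqm (Fin n → Fqm)) (r : ℕ) : ℕ :=
  sInf { dv | ∃ V : Submodule Fqm (Fin n → Fqm), GaloisClosed q m V ∧
    r ≤ finrank Fqm ↥(C₁ ⊓ V) - finrank Fqm ↥(C₂ ⊓ V) ∧ dv = finrank Fqm ↥V }

/-- Minimum rank distance of an arbitrary (possibly nonlinear) code. -/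
noncomputable def dRset (q m : ℕ) {Fqm : Type} [Field Fqm] (C : Set (Fin n → Fqm)) : ℕ :=
  sInf { w | ∃ c₁ ∈ C, ∃ c₂ ∈ C, c₁ ≠ c₂ ∧ w = wtRv q m (c₁ - c₂) }

/-- The linear functional `x ↦ Σ_j x_j y_j` (dot product with `y`). -/
def dotLin {K : Type} [Field K] (y : Fin n → K) : (Fin n → K) →ₗ[K] K :=
  ∑ j, y j • LinearMap.proj j

/-- Orthogonal complement of a subspace with respect to the standard bilinear form. -/
def perp {K : Type} [Field K] (L : Submodule K (Fin n → K)) : Submodule K (Fin n → K) :=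
  ⨅ y ∈ L, LinearMap.ker (dotLin y)

/-- The coordinatewise inclusion `Fq^n → Fqm^n`. -/
def embFq (Fq Fqm : Type) [Field Fq] [Field Fqm] [Algebra Fq Fqm] :
    (Fin n → Fq) →ₗ[Fq] (Fin n → Fqm) :=
  LinearMap.pi fun j => (Algebra.linearMap Fq Fqm).comp (LinearMap.proj j)

/-- `V_L = L ⊗ Fqm`, the `Fqm`-span of `L ⊆ Fq^n` inside `Fqm^n`. -/
def VL {Fq : Type} (Fqm : Type) [Field Fq] [Field Fqm] [Algebra Fq Fqm]
    (L : Submodule Fq (Fin n → Fq)) : Submodule Fqm (Fin n → Fqm) :=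
  Submodule.span Fqm (embFq Fq Fqm '' (L : Set (Fin n → Fq)))

/-- Rank-punctured code `C^L`: the image of `C` in `Fqm^n / V_{L^⊥}`. -/
noncomputable def punct {Fq Fqm : Type} [Field Fq] [Field Fqm] [Algebra Fq Fqm]
    (L : Submodule Fq (Fin n → Fq)) (C : Submodule Fqm (Fin n → Fqm)) :
    Submodule Fqm ((Fin n → Fqm) ⧸ VL Fqm (perp L)) :=
  Submodule.map (VL Fqm (perp L)).mkQ C

/-!
Both bounds come from modifying a Galois closed space `V` of minimal dimension.
Intersecting `V` with a coordinate hyperplane `x_j = 0` not containing it keeps it Galois closed,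
drops `dim V` by at least one and `dim (C ∩ V)` by at most one: this gives strict monotonicity.
Conversely, adding to `V` the Galois closure of a single codeword `c ∉ V`, which is spanned by the
`m` Frobenius conjugates of `c`, raises `dim (C ∩ V)` by at least one and `dim V` by at most `m`.
-/

section LinearAlgebra

variable {K E : Type*} [Field K] [AddCommGroup E] [Module K E] [FiniteDimensional K E]

theorem finrank_le_finrank_inf_ker_add_one (W : Submodule K E) (f : Dual K E) :
    finrank K W ≤ finrank K ↥(W ⊓ LinearMap.ker f) + 1 := by
  have rank_nullity := (f.domRestrict W).finrank_range_add_finrank_ker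
  have range_le_one : finrank K (LinearMap.range (f.domRestrict W)) ≤ 1 :=
    (Submodule.finrank_le _).trans_eq (finrank_self K)
  have ker_eq : finrank K (LinearMap.ker (f.domRestrict W)) =
      finrank K ↥(W ⊓ LinearMap.ker f) := by
    rw [LinearMap.ker_domRestrict, ← Submodule.map_comap_subtype]
    exact (Submodule.finrank_map_subtype_eq W _).symm
  omega

theorem finrank_inf_lt_finrank_inf_sup {C V W : Submodule K E} {c : E}
    (hcC : c ∈ C) (hcV : c ∉ V) (hcW : c ∈ W) :
    finrank K ↥(C ⊓ V) < finrank K ↥(C ⊓ (V ⊔ W)) :=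
  Submodule.finrank_lt_finrank_of_lt <| SetLike.lt_iff_le_and_exists.2
    ⟨inf_le_inf_left C le_sup_left, c, mem_inf.2 ⟨hcC, mem_sup_right hcW⟩,
      fun hc => hcV (mem_inf.1 hc).2⟩

end LinearAlgebra

section GaloisClosed

variable {q m : ℕ} {K : Type} [Field K] {U V D : Submodule K (Fin n → K)}

theorem qpowMap_zero (v : Fin n → K) : qpowMap q 0 v = v := by
  funext j
  simp [qpowMap]

theorem qpowMap_qpowMap (i j : ℕ) (v : Fin n → K) :
    qpowMap q i (qpowMap q j v) = qpowMap q (j + i) v := by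
  funext l
  simp only [qpowMap, ← pow_mul, ← pow_add]

theorem galClosure_le_iff :
    galClosure q m D ≤ V ↔ ∀ i < m, ∀ v ∈ D, qpowMap q i v ∈ V := by
  simp only [galClosure, span_le, Set.iUnion_subset_iff, Finset.mem_range, Set.image_subset_iff]
  rfl

theorem qpowMap_mem_galClosure {i : ℕ} (hi : i < m) {v : Fin n → K} (hv : v ∈ D) :
    qpowMap q i v ∈ galClosure q m D :=
  galClosure_le_iff.1 le_rfl i hi v hv

theorem le_galClosure (hm : m ≠ 0) : D ≤ galClosure q m D := fun v hv => by
  simpa only [qpowMap_zero] using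
    qpowMap_mem_galClosure (q := q) (Nat.pos_of_ne_zero hm) hv

theorem galoisClosed_iff (hm : m ≠ 0) :
    GaloisClosed q m V ↔ ∀ i < m, ∀ v ∈ V, qpowMap q i v ∈ V := by
  rw [GaloisClosed, ← (le_galClosure hm).ge_iff_eq', galClosure_le_iff]

theorem galoisClosed_top (hm : m ≠ 0) : GaloisClosed q m (⊤ : Submodule K (Fin n → K)) :=
  (galoisClosed_iff hm).2 fun _ _ _ _ => mem_top

theorem GaloisClosed.inf (hm : m ≠ 0) (hU : GaloisClosed q m U) (hV : GaloisClosed q m V) :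
    GaloisClosed q m (U ⊓ V) := by
  rw [galoisClosed_iff hm] at hU hV ⊢
  exact fun i hi v hv => ⟨hU i hi v hv.1, hV i hi v hv.2⟩

theorem galoisClosed_ker_proj (hq : q ≠ 0) (hm : m ≠ 0) (j : Fin n) :
    GaloisClosed q m (LinearMap.ker (LinearMap.proj j : (Fin n → K) →ₗ[K] K)) := by
  refine (galoisClosed_iff hm).2 fun i _ v (hv : v j = 0) => ?_
  change v j ^ q ^ i = 0
  rw [hv, zero_pow (pow_ne_zero i hq)]

end GaloisClosed

section GeneralizedRankWeight

variable {q m r : ℕ} {K : Type} [Field K] {C V : Submodule K (Fin n → K)}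

theorem dR_le_finrank (hV : GaloisClosed q m V) (hr : r ≤ finrank K ↥(C ⊓ V)) :
    dR q m C r ≤ finrank K V :=
  Nat.sInf_le ⟨V, hV, hr, rfl⟩

theorem exists_galoisClosed_finrank_eq_dR (hm : m ≠ 0) (hr : r ≤ finrank K C) :
    ∃ V : Submodule K (Fin n → K),
      GaloisClosed q m V ∧ r ≤ finrank K ↥(C ⊓ V) ∧ finrank K V = dR q m C r := by
  obtain ⟨V, hV, hrV, hdim⟩ := Nat.sInf_mem (s := { d | ∃ V : Submodule K (Fin n → K),
    GaloisClosed q m V ∧ r ≤ finrank K ↥(C ⊓ V) ∧ d = finrank K V })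
    ⟨_, ⊤, galoisClosed_top hm, by rwa [inf_top_eq], rfl⟩
  exact ⟨V, hV, hrV, hdim.symm⟩

theorem dR_lt_dR_succ (hq : q ≠ 0) (hm : m ≠ 0) (hr : r < finrank K C) :
    dR q m C r < dR q m C (r + 1) := by
  obtain ⟨V, hV, hrV, hdim⟩ := exists_galoisClosed_finrank_eq_dR (q := q) (r := r + 1) hm hr
  have V_ne_bot : V ≠ ⊥ := by
    rintro rfl
    rw [inf_bot_eq, finrank_bot] at hrV
    exact Nat.not_succ_le_zero r hrV
  obtain ⟨v, hvV, hv⟩ := V.exists_mem_ne_zero_of_ne_bot V_ne_bot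
  obtain ⟨j, hvj⟩ := Function.ne_iff.1 hv
  set H : Submodule K (Fin n → K) := LinearMap.ker (LinearMap.proj j)
  have hrVH : r ≤ finrank K ↥(C ⊓ (V ⊓ H)) := by
    rw [← inf_assoc]
    exact Nat.le_of_add_le_add_right (hrV.trans (finrank_le_finrank_inf_ker_add_one _ _))
  have V_not_le_H : ¬ V ≤ H := fun hVH => hvj (hVH hvV)
  calc dR q m C r ≤ finrank K ↥(V ⊓ H) :=
        dR_le_finrank (hV.inf hm (galoisClosed_ker_proj hq hm j)) hrVH
    _ < finrank K V := Submodule.finrank_lt_finrank_of_lt (inf_lt_left.2 V_not_le_H)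
    _ = dR q m C (r + 1) := hdim

end GeneralizedRankWeight

section FrobeniusConjugates

variable {Fq Fqm : Type} [Field Fq] [Finite Fq] [Field Fqm] [Algebra Fq Fqm]
  {U V : Submodule Fqm (Fin n → Fqm)}

variable (Fq Fqm) in
/-- The `q^i`-power endomorphism of an extension of the field `Fq` with `q` elements. -/
noncomputable def qpowRingHom (i : ℕ) : Fqm →+* Fqm :=
  letI := Fintype.ofFinite Fq
  (FiniteField.frobeniusAlgHom Fq Fqm ^ i).toRingHom

theorem qpowRingHom_apply (i : ℕ) (x : Fqm) : qpowRingHom Fq Fqm i x = x ^ Nat.card Fq ^ i := by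
  let := Fintype.ofFinite Fq
  simp [qpowRingHom, AlgHom.coe_pow, FiniteField.coe_frobeniusAlgHom, pow_iterate,
    Nat.card_eq_fintype_card]

variable (Fq Fqm n) in
/-- The map `qpowMap`, for `q` the cardinality of a subfield `Fq`, bundled as a semilinear map over
the `q^i`-power endomorphism, so that `Submodule.comap` applies to it. -/
noncomputable def qpowSemilinearMap (i : ℕ) :
    (Fin n → Fqm) →ₛₗ[qpowRingHom Fq Fqm i] (Fin n → Fqm) where
  toFun := qpowMap (Nat.card Fq) i
  map_add' u v := by
    funext j
    simp only [qpowMap, Pi.add_apply, ← qpowRingHom_apply, map_add]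
  map_smul' a v := by
    funext j
    simp only [qpowMap, Pi.smul_apply, smul_eq_mul, ← qpowRingHom_apply, map_mul]

theorem qpowSemilinearMap_apply (i : ℕ) (v : Fin n → Fqm) :
    qpowSemilinearMap n Fq Fqm i v = qpowMap (Nat.card Fq) i v :=
  rfl

theorem galClosure_le_iff_le_comap {m : ℕ} :
    galClosure (Nat.card Fq) m U ≤ V ↔ ∀ i < m, U ≤ V.comap (qpowSemilinearMap n Fq Fqm i) :=
  galClosure_le_iff

theorem galoisClosed_iff_le_comap {m : ℕ} (hm : m ≠ 0) :
    GaloisClosed (Nat.card Fq) m V ↔ ∀ i < m, V ≤ V.comap (qpowSemilinearMap n Fq Fqm i) :=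
  galoisClosed_iff hm

theorem GaloisClosed.sup {m : ℕ} (hm : m ≠ 0) (hU : GaloisClosed (Nat.card Fq) m U)
    (hV : GaloisClosed (Nat.card Fq) m V) : GaloisClosed (Nat.card Fq) m (U ⊔ V) := by
  rw [galoisClosed_iff_le_comap hm] at hU hV ⊢
  exact fun i hi => sup_le ((hU i hi).trans (comap_mono le_sup_left))
    ((hV i hi).trans (comap_mono le_sup_right))

theorem galClosure_span_singleton (m : ℕ) (c : Fin n → Fqm) :
    galClosure (Nat.card Fq) m (span Fqm {c}) =
      span Fqm (Set.range fun i : Fin m => qpowMap (Nat.card Fq) i c) := by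
  apply le_antisymm
  · refine galClosure_le_iff_le_comap.2 fun i hi => ?_
    exact (span_singleton_le_iff_mem _ _).2 (subset_span ⟨⟨i, hi⟩, rfl⟩)
  · rw [span_le, Set.range_subset_iff]
    exact fun i => qpowMap_mem_galClosure i.2 (mem_span_singleton_self c)

theorem wtRv_le (m : ℕ) (c : Fin n → Fqm) : wtRv (Nat.card Fq) m c ≤ m := by
  rw [wtRv, wtR, galClosure_span_singleton]
  exact (finrank_range_le_card _).trans_eq (Fintype.card_fin m)

variable [FiniteDimensional Fq Fqm]

theorem pow_natCard_pow_finrank (x : Fqm) : x ^ Nat.card Fq ^ finrank Fq Fqm = x := by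
  have : Finite Fqm := Module.finite_of_finite Fq
  let := Fintype.ofFinite Fqm
  rw [← Module.natCard_eq_pow_finrank, Nat.card_eq_fintype_card, FiniteField.pow_card]

theorem qpowMap_mod_finrank (i : ℕ) (v : Fin n → Fqm) :
    qpowMap (Nat.card Fq) (i % finrank Fq Fqm) v = qpowMap (Nat.card Fq) i v := by
  have periodic : Function.Periodic (fun i => qpowMap (Nat.card Fq) i v) (finrank Fq Fqm) := by
    intro i
    funext j
    simp only [qpowMap, pow_add, pow_mul, pow_natCard_pow_finrank]
  exact periodic.map_mod_nat i

theorem galoisClosed_galClosure (D : Submodule Fqm (Fin n → Fqm)) :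
    GaloisClosed (Nat.card Fq) (finrank Fq Fqm) (galClosure (Nat.card Fq) (finrank Fq Fqm) D) := by
  refine (galoisClosed_iff_le_comap finrank_pos.ne').2 fun i _ => ?_
  refine galClosure_le_iff.2 fun j _ v hv => ?_
  rw [mem_comap, qpowSemilinearMap_apply, qpowMap_qpowMap, ← qpowMap_mod_finrank]
  exact qpowMap_mem_galClosure (Nat.mod_lt _ finrank_pos) hv

theorem dR_succ_le_dR_add_finrank {r : ℕ} {C : Submodule Fqm (Fin n → Fqm)}
    (hr : r < finrank Fqm C) :
    dR (Nat.card Fq) (finrank Fq Fqm) C (r + 1) ≤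
      dR (Nat.card Fq) (finrank Fq Fqm) C r + finrank Fq Fqm := by
  have hm : finrank Fq Fqm ≠ 0 := finrank_pos.ne'
  obtain ⟨V, hV, hrV, hdim⟩ := exists_galoisClosed_finrank_eq_dR (q := Nat.card Fq) hm hr.le
  rw [← hdim]
  by_cases hCV : C ≤ V
  · exact (dR_le_finrank hV (by rwa [inf_eq_left.2 hCV])).trans (Nat.le_add_right _ _)
  obtain ⟨c, hcC, hcV⟩ := SetLike.not_le_iff_exists.1 hCV
  set W := galClosure (Nat.card Fq) (finrank Fq Fqm) (span Fqm {c})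
  have hcW : c ∈ W := le_galClosure hm (mem_span_singleton_self c)
  calc dR (Nat.card Fq) (finrank Fq Fqm) C (r + 1) ≤ finrank Fqm ↥(V ⊔ W) :=
        dR_le_finrank (hV.sup hm (galoisClosed_galClosure _))
          (hrV.trans_lt (finrank_inf_lt_finrank_inf_sup hcC hcV hcW))
    _ ≤ finrank Fqm V + finrank Fqm W := finrank_add_le_finrank_add_finrank V W
    _ ≤ finrank Fqm V + finrank Fq Fqm := Nat.add_le_add_left (wtRv_le _ c) _

end FrobeniusConjugates

/-- for every linear code of dimension `k` and `1 ≤ r ≤ k − 1`,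
`1 ≤ d_{R,r+1}(C) − d_{R,r}(C) ≤ m`. -/
theorem stmt10 (q m n k r : ℕ) (Fq Fqm : Type) [Field Fq] [Field Fqm] [Algebra Fq Fqm]
    [Finite Fqm] (hq : Nat.card Fq = q) (hm : finrank Fq Fqm = m)
    (C : Submodule Fqm (Fin n → Fqm)) (hk : finrank Fqm C = k)
    (hr1 : 1 ≤ r) (hrk : r + 1 ≤ k) :
    dR q m C r + 1 ≤ dR q m C (r + 1) ∧ dR q m C (r + 1) ≤ dR q m C r + m := by
  have : Finite Fq := Finite.of_injective _ (algebraMap Fq Fqm).injective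
  subst hq hm hk
  exact ⟨dR_lt_dR_succ Nat.card_pos.ne' finrank_pos.ne' hrk, dR_succ_le_dR_add_finrank hrk⟩

end RankPaper
end

section
/- (Relative alternative Singleton bound.) If n > m, then for all nested F_{q^m}-linear codes C_2 ⊊ C_1 ⊆ F_{q^m}^n with k_i = dim C_i (i = 1, 2) and every 1 ≤ r ≤ k_1 − k_2, one has M_{R,r}(C_1, C_2) ≤ m(n − k_1)/(n − k_2) + m(r − 1) + 1; equivalently, (n − k_2) · (M_{R,r}(C_1, C_2) − m(r − 1) − 1) ≤ m(n − k_1). -/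
open Submodule Module

namespace RankPaper

variable {n : ℕ}

/-!
Choose a subspace `L ⊆ Fq^n` such that `V_L` is a complement of `C₂`; then `dim L = n - k₂`, and
`E = C₁ ∩ V_L` has dimension at least `k₁ - k₂` and meets `C₂` trivially. Fix `t` elements
`b₁, …, b_t` of `Fqm` that are independent over `Fq`. The vectors `∑ bₐ lₐ` with `lₐ ∈ L` form an
`Fq`-space of dimension `t (n - k₂)`, whereas `Fqm^n / C₁` has dimension `m (n - k₁)` over `Fq`.
As soon as `t (n - k₂) > m (n - k₁)`, some nonzero such vector therefore lies in `E`, and it is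
contained in the Galois closed space spanned by `l₁, …, l_t`. Each of `r - 1` further independent
vectors of `E` is contained in a Galois closed space of dimension at most `m`. The least admissible
`t` is `⌊m (n - k₁) / (n - k₂)⌋ + 1`, and it is at most `m`, so that `b₁, …, b_t` exist.
-/

section LinearAlgebra

variable {K M : Type*} [Field K] [AddCommGroup M] [Module K M]

theorem exists_subset_isCompl_span {S : Set M} (hS : span K S = ⊤) (C : Submodule K M) :
    ∃ T ⊆ S, IsCompl C (span K T) := by
  obtain ⟨T, hTS, -, hST, hT⟩ :=
    exists_linearIndepOn_extension (v := C.mkQ) (linearIndepOn_empty K _) S.empty_subset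
  refine ⟨T, hTS, ?_, ?_⟩
  · simpa using (Submodule.range_ker_disjoint (v := ((↑) : T → M)) hT).symm
  · have hmap : map C.mkQ (span K T) = ⊤ := by
      rw [eq_top_iff, ← C.range_mkQ, ← Submodule.map_top, ← hS, map_span, map_span]
      exact span_le.2 hST
    rw [codisjoint_iff, sup_comm, ← C.ker_mkQ, ← comap_map_eq, hmap, comap_top]

theorem exists_fin_finrank_span_range_eq (D : Submodule K M) [FiniteDimensional K D] :
    ∃ f : Fin (finrank K D) → M, span K (Set.range f) = D :=
  ⟨D.subtype ∘ finBasis K D, by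
    rw [Set.range_comp, span_image, (finBasis K D).span_eq, Submodule.map_top, range_subtype]⟩

theorem exists_le_disjoint_finrank_eq [FiniteDimensional K M] {A E : Submodule K M} (hAE : A ≤ E)
    {s : ℕ} (hs : finrank K A + s ≤ finrank K E) :
    ∃ D ≤ E, Disjoint A D ∧ finrank K D = s := by
  obtain ⟨B, hAB, rfl⟩ := IsModularLattice.exists_disjoint_and_sup_eq hAE
  have hB : s ≤ finrank K B := by
    have := finrank_add_le_finrank_add_finrank A B
    lia
  obtain ⟨f, hf⟩ := exists_linearIndependent_of_le_finrank hB
  have hDB : span K (Set.range (B.subtype ∘ f)) ≤ B :=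
    span_le.2 (Set.range_subset_iff.2 fun i => (f i).2)
  refine ⟨_, hDB.trans le_sup_right, hAB.mono_right hDB, ?_⟩
  simpa using finrank_span_eq_card (hf.map' B.subtype B.ker_subtype)

theorem finrank_sub_finrank_le_finrank_inf_of_isCompl [FiniteDimensional K M]
    (C₁ : Submodule K M) {C₂ U : Submodule K M} (hU : IsCompl C₂ U) :
    finrank K C₁ - finrank K C₂ ≤ finrank K ↥(C₁ ⊓ U) := by
  have := finrank_le (C₁ ⊔ U)
  have := finrank_sup_add_finrank_inf_eq C₁ U
  have := finrank_add_eq_of_isCompl hU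
  lia

theorem finrank_add_finrank_inf_le_of_disjoint [FiniteDimensional K M]
    {C₁ C₂ D V : Submodule K M} (hC : C₂ ≤ C₁) (hDC : D ≤ C₁) (hDV : D ≤ V)
    (hD : Disjoint D C₂) :
    finrank K D + finrank K ↥(C₂ ⊓ V) ≤ finrank K ↥(C₁ ⊓ V) := by
  have hsup : D ⊔ C₂ ⊓ V ≤ C₁ ⊓ V := sup_le (le_inf hDC hDV) (inf_le_inf_right V hC)
  have := finrank_sup_add_finrank_inf_eq D (C₂ ⊓ V)
  rw [(hD.mono_right inf_le_left).eq_bot, finrank_bot] at this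
  have := finrank_mono hsup
  lia

end LinearAlgebra

section RationalSubspaces

variable {Fq Fqm : Type} [Field Fq] [Field Fqm] [Algebra Fq Fqm]

theorem embFq_apply (v : Fin n → Fq) (j : Fin n) :
    embFq Fq Fqm v j = algebraMap Fq Fqm (v j) :=
  rfl

theorem VL_span (S : Set (Fin n → Fq)) :
    VL Fqm (span Fq S) = span Fqm (embFq Fq Fqm '' S) := by
  rw [VL, ← map_coe, map_span, span_span_of_tower]

theorem VL_sup (L L' : Submodule Fq (Fin n → Fq)) :
    VL Fqm (L ⊔ L') = VL Fqm L ⊔ VL Fqm L' := by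
  rw [← span_eq L, ← span_eq L', ← span_union, VL_span, VL_span, VL_span, Set.image_union,
    span_union]

theorem finrank_VL_le (L : Submodule Fq (Fin n → Fq)) :
    finrank Fqm (VL Fqm L) ≤ finrank Fq L := by
  obtain ⟨f, hf⟩ := exists_fin_finrank_span_range_eq L
  calc finrank Fqm (VL Fqm L)
      = finrank Fqm (span Fqm (Set.range (embFq Fq Fqm ∘ f))) := by
        rw [Set.range_comp, ← VL_span, hf]
    _ ≤ finrank Fq L := (finrank_range_le_card _).trans_eq (Fintype.card_fin _)

theorem span_range_embFq : span Fqm (Set.range (embFq (n := n) Fq Fqm)) = ⊤ := by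
  rw [eq_top_iff, ← (Pi.basisFun Fqm (Fin n)).span_eq, span_le]
  rintro _ ⟨j, rfl⟩
  refine subset_span ⟨Pi.single j 1, ?_⟩
  ext k
  simp [embFq_apply, Pi.single_apply, apply_ite]

theorem exists_isCompl_VL (C : Submodule Fqm (Fin n → Fqm)) :
    ∃ L : Submodule Fq (Fin n → Fq), IsCompl C (VL Fqm L) := by
  obtain ⟨T, hT, hCT⟩ := exists_subset_isCompl_span (span_range_embFq (Fq := Fq)) C
  refine ⟨span Fq (embFq Fq Fqm ⁻¹' T), ?_⟩
  rwa [VL_span, Set.image_preimage_eq_of_subset hT]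

theorem sum_smul_embFq_mem_VL {ι : Type*} [Fintype ι] (b : ι → Fqm)
    {L : Submodule Fq (Fin n → Fq)} {w : ι → Fin n → Fq} (hw : ∀ a, w a ∈ L) :
    ∑ a, b a • embFq Fq Fqm (w a) ∈ VL Fqm L :=
  sum_mem fun a _ => smul_mem _ _ (subset_span (Set.mem_image_of_mem _ (hw a)))

theorem eq_zero_of_sum_smul_embFq_eq_zero {ι : Type*} [Fintype ι] {b : ι → Fqm}
    (hb : LinearIndependent Fq b) {w : ι → Fin n → Fq}
    (hw : ∑ a, b a • embFq Fq Fqm (w a) = 0) : w = 0 := by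
  ext a j
  refine Fintype.linearIndependent_iff.1 hb (fun a => w a j) ?_ a
  simpa [embFq_apply, Algebra.smul_def, mul_comm] using congrFun hw j

theorem exists_le_VL_finrank_le [FiniteDimensional Fq Fqm] (D : Submodule Fqm (Fin n → Fqm)) :
    ∃ L : Submodule Fq (Fin n → Fq),
      finrank Fq L ≤ finrank Fq Fqm * finrank Fqm D ∧ D ≤ VL Fqm L := by
  let b := finBasis Fq Fqm
  obtain ⟨d, hd⟩ := exists_fin_finrank_span_range_eq D
  let w : Fin (finrank Fq Fqm) × Fin (finrank Fqm D) → Fin n → Fq := fun p j => b.repr (d p.2 j) p.1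
  have hdw (i) : d i = ∑ a, b a • embFq Fq Fqm (w (a, i)) := by
    ext j
    simpa [w, embFq_apply, Algebra.smul_def, mul_comm] using (b.sum_repr (d i j)).symm
  refine ⟨span Fq (Set.range w), (finrank_range_le_card w).trans_eq (by simp), ?_⟩
  refine hd.symm.trans_le (span_le.2 (Set.range_subset_iff.2 fun i => ?_))
  exact hdw i ▸ sum_smul_embFq_mem_VL b fun a => subset_span (Set.mem_range_self (a, i))

theorem exists_finrank_eq_add_le_VL [FiniteDimensional Fq Fqm]
    {A E : Submodule Fqm (Fin n → Fqm)} (hAE : A ≤ E) {L : Submodule Fq (Fin n → Fq)}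
    (hAL : A ≤ VL Fqm L) {s : ℕ} (hs : finrank Fqm A + s ≤ finrank Fqm E) :
    ∃ D ≤ E, finrank Fqm D = finrank Fqm A + s ∧ ∃ L' : Submodule Fq (Fin n → Fq),
      finrank Fq L' ≤ finrank Fq L + finrank Fq Fqm * s ∧ D ≤ VL Fqm L' := by
  obtain ⟨B, hBE, hAB, rfl⟩ := exists_le_disjoint_finrank_eq hAE hs
  obtain ⟨N, hN, hBN⟩ := exists_le_VL_finrank_le (Fq := Fq) B
  refine ⟨A ⊔ B, sup_le hAE hBE, ?_, L ⊔ N, ?_, ?_⟩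
  · rw [← finrank_sup_add_finrank_inf_eq, hAB.eq_bot, finrank_bot, add_zero]
  · exact (finrank_add_le_finrank_add_finrank L N).trans (by gcongr)
  · exact (sup_le_sup hAL hBN).trans_eq (VL_sup L N).symm

theorem exists_ne_zero_mem_inf_VL_of_lt [FiniteDimensional Fq Fqm] (C : Submodule Fqm (Fin n → Fqm))
    (L : Submodule Fq (Fin n → Fq)) {t : ℕ} (htm : t ≤ finrank Fq Fqm)
    (ht : finrank Fq Fqm * finrank Fqm ((Fin n → Fqm) ⧸ C) < t * finrank Fq L) :
    ∃ x ∈ C ⊓ VL Fqm L, x ≠ 0 ∧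
      ∃ L' : Submodule Fq (Fin n → Fq), finrank Fq L' ≤ t ∧ x ∈ VL Fqm L' := by
  obtain ⟨b, hb⟩ := exists_linearIndependent_of_le_finrank htm
  let T : (Fin t → L) →ₗ[Fq] Fin n → Fqm :=
    ∑ a, b a • (embFq Fq Fqm ∘ₗ L.subtype ∘ₗ LinearMap.proj a)
  have hT : ∀ y, T y = ∑ a, b a • embFq Fq Fqm (y a) := fun y => by simp [T]
  have hker : LinearMap.ker (C.mkQ.restrictScalars Fq ∘ₗ T) ≠ ⊥ := by
    apply LinearMap.ker_ne_bot_of_finrank_lt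
    simpa [← finrank_mul_finrank Fq Fqm (_ ⧸ C), finrank_pi_fintype] using ht
  obtain ⟨y, hyC, hy⟩ := exists_mem_ne_zero_of_ne_bot hker
  refine ⟨T y, ⟨by simpa using hyC, ?_⟩, fun hTy => hy ?_,
    span Fq (Set.range fun a => (y a).1), ?_, ?_⟩
  · exact hT y ▸ sum_smul_embFq_mem_VL b fun a => (y a).2
  · have := eq_zero_of_sum_smul_embFq_eq_zero hb ((hT y).symm.trans hTy)
    ext a : 2
    exact congrFun this a
  · exact (finrank_range_le_card _).trans_eq (Fintype.card_fin t)
  · exact hT y ▸ sum_smul_embFq_mem_VL b fun a => subset_span (Set.mem_range_self a)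

end RationalSubspaces

section RankWeights

variable {Fq Fqm : Type} [Field Fq] [Field Fqm] [Algebra Fq Fqm]

theorem qpowMap_mem_VL [Finite Fq] {L : Submodule Fq (Fin n → Fq)} {v : Fin n → Fqm}
    (hv : v ∈ VL Fqm L) (i : ℕ) : qpowMap (Nat.card Fq) i v ∈ VL Fqm L := by
  have := Fintype.ofFinite Fq
  let σ : Fqm →ₐ[Fq] Fqm := FiniteField.frobeniusAlgHom Fq Fqm ^ i
  have hσ (v : Fin n → Fqm) : qpowMap (Nat.card Fq) i v = σ ∘ v := by
    ext j
    simp [σ, qpowMap, AlgHom.coe_pow, FiniteField.coe_frobeniusAlgHom, pow_iterate]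
  let f : (Fin n → Fqm) →ₛₗ[(σ : Fqm →+* Fqm)] Fin n → Fqm :=
    { toFun := fun v => σ ∘ v
      map_add' := fun v w => by ext; simp
      map_smul' := fun c v => by ext; simp }
  suffices hL : VL Fqm L ≤ (VL Fqm L).comap f from hσ v ▸ hL hv
  refine span_le.2 ?_
  rintro _ ⟨l, hl, rfl⟩
  have hfix : f (embFq Fq Fqm l) = embFq Fq Fqm l := by
    ext j
    exact σ.commutes (l j)
  rw [SetLike.mem_coe, mem_comap, hfix]
  exact subset_span (Set.mem_image_of_mem _ hl)

theorem galoisClosed_VL [Finite Fq] {m : ℕ} (hm : 0 < m) (L : Submodule Fq (Fin n → Fq)) :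
    GaloisClosed (Nat.card Fq) m (VL Fqm L) := by
  refine le_antisymm (span_le.2 ?_) fun v hv => subset_span ?_
  · simp only [Set.iUnion_subset_iff, Set.image_subset_iff]
    exact fun i _ v hv => qpowMap_mem_VL hv i
  · simp only [Set.mem_iUnion]
    exact ⟨0, Finset.mem_range.2 hm, v, hv, by ext; simp [qpowMap]⟩

theorem MR_finrank_le_finrank [Finite Fq] {m : ℕ} (hm : 0 < m)
    {C₁ C₂ D : Submodule Fqm (Fin n → Fqm)} (hC : C₂ ≤ C₁) (hDC : D ≤ C₁) (hD : Disjoint D C₂)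
    {L : Submodule Fq (Fin n → Fq)} (hDL : D ≤ VL Fqm L) :
    MR (Nat.card Fq) m C₁ C₂ (finrank Fqm D) ≤ finrank Fq L := by
  have hdim : finrank Fqm D ≤ finrank Fqm ↥(C₁ ⊓ VL Fqm L) - finrank Fqm ↥(C₂ ⊓ VL Fqm L) :=
    Nat.le_sub_of_add_le (finrank_add_finrank_inf_le_of_disjoint hC hDC hDL hD)
  have hMR : MR (Nat.card Fq) m C₁ C₂ (finrank Fqm D) ≤ finrank Fqm (VL Fqm L) :=
    Nat.sInf_le ⟨VL Fqm L, galoisClosed_VL hm L, hdim, rfl⟩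
  exact hMR.trans (finrank_VL_le L)

theorem MR_succ_le_of_lt [Finite Fqm] {C₁ C₂ : Submodule Fqm (Fin n → Fqm)} (hC : C₂ ≤ C₁)
    {s t : ℕ} (hs : s + 1 ≤ finrank Fqm C₁ - finrank Fqm C₂) (htm : t ≤ finrank Fq Fqm)
    (ht : finrank Fq Fqm * (n - finrank Fqm C₁) < t * (n - finrank Fqm C₂)) :
    MR (Nat.card Fq) (finrank Fq Fqm) C₁ C₂ (s + 1) ≤ t + finrank Fq Fqm * s := by
  have : Finite Fq := .of_injective _ (algebraMap Fq Fqm).injective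
  have : FiniteDimensional Fq Fqm := .of_finite
  obtain ⟨L, hL⟩ := exists_isCompl_VL (Fq := Fq) C₂
  have hquot : finrank Fqm ((Fin n → Fqm) ⧸ C₁) = n - finrank Fqm C₁ := by
    rw [finrank_quotient, finrank_fin_fun]
  have hcompl : finrank Fqm C₂ + finrank Fqm (VL Fqm L) = n := by
    rw [finrank_add_eq_of_isCompl hL, finrank_fin_fun]
  have hLdim : n - finrank Fqm C₂ ≤ finrank Fq L :=
    (Nat.sub_eq_of_eq_add' hcompl.symm).trans_le (finrank_VL_le L)
  obtain ⟨x, hxE, hx0, L₀, hL₀, hxL₀⟩ := exists_ne_zero_mem_inf_VL_of_lt C₁ L htm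
    (hquot ▸ ht.trans_le (Nat.mul_le_mul_left t hLdim))
  have hx : finrank Fqm (span Fqm {x}) = 1 := finrank_span_singleton hx0
  have hE := finrank_sub_finrank_le_finrank_inf_of_isCompl C₁ hL
  obtain ⟨D, hDE, hD, L', hL', hDL'⟩ := exists_finrank_eq_add_le_VL (s := s)
    ((span_singleton_le_iff_mem _ _).2 hxE) ((span_singleton_le_iff_mem _ _).2 hxL₀) (by lia)
  have hDC₂ : Disjoint D C₂ := hL.symm.disjoint.mono_left (hDE.trans inf_le_right)
  calc MR (Nat.card Fq) (finrank Fq Fqm) C₁ C₂ (s + 1)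
      = MR (Nat.card Fq) (finrank Fq Fqm) C₁ C₂ (finrank Fqm D) := by rw [hD, hx, add_comm]
    _ ≤ finrank Fq L' := MR_finrank_le_finrank finrank_pos hC (hDE.trans inf_le_left) hDC₂ hDL'
    _ ≤ t + finrank Fq Fqm * s := hL'.trans (by gcongr)

theorem MR_succ_le_div [Finite Fqm] {C₁ C₂ : Submodule Fqm (Fin n → Fqm)} (hC : C₂ ≤ C₁) {s : ℕ}
    (hs : s + 1 ≤ finrank Fqm C₁ - finrank Fqm C₂) :
    MR (Nat.card Fq) (finrank Fq Fqm) C₁ C₂ (s + 1) ≤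
      finrank Fq Fqm * (n - finrank Fqm C₁) / (n - finrank Fqm C₂) + 1 + finrank Fq Fqm * s := by
  have : FiniteDimensional Fq Fqm := .of_finite
  have hn : finrank Fqm C₁ ≤ n := by simpa using finrank_le C₁
  have hpos : 0 < n - finrank Fqm C₂ := by lia
  refine MR_succ_le_of_lt hC hs ?_ (Nat.lt_mul_of_div_lt (Nat.lt_succ_self _) hpos)
  rw [Nat.succ_le_iff, Nat.div_lt_iff_lt_mul hpos]
  exact Nat.mul_lt_mul_of_pos_left (by lia) finrank_pos

end RankWeights

theorem stmt12_general (r : ℕ) (Fq Fqm : Type) [Field Fq] [Field Fqm] [Algebra Fq Fqm]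
    [Finite Fqm] (C₁ C₂ : Submodule Fqm (Fin n → Fqm)) (hC : C₂ ≤ C₁) (hr1 : 1 ≤ r)
    (hrk : r ≤ finrank Fqm C₁ - finrank Fqm C₂) :
    ((n : ℤ) - finrank Fqm C₂) *
        (MR (Nat.card Fq) (finrank Fq Fqm) C₁ C₂ r - finrank Fq Fqm * ((r : ℤ) - 1) - 1) ≤
      finrank Fq Fqm * ((n : ℤ) - finrank Fqm C₁) := by
  obtain ⟨s, rfl⟩ := Nat.exists_eq_add_of_le' hr1
  have hn₁ : finrank Fqm C₁ ≤ n := by simpa using finrank_le C₁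
  have hn₂ : finrank Fqm C₂ ≤ n := (finrank_mono hC).trans hn₁
  have hMR := MR_succ_le_div (Fq := Fq) hC hrk
  have hdiv := Nat.mul_div_le (finrank Fq Fqm * (n - finrank Fqm C₁)) (n - finrank Fqm C₂)
  set d := finrank Fq Fqm * (n - finrank Fqm C₁) / (n - finrank Fqm C₂)
  zify [hn₁, hn₂] at hMR hdiv
  calc _ ≤ ((n : ℤ) - finrank Fqm C₂) * d := by
        gcongr
        · lia
        · push_cast
          linarith
    _ ≤ _ := hdiv

/-- relative alternative Singleton bound: if `n > m`, then for nested
codes `C₂ ⊊ C₁ ⊆ Fqm^n` with `kᵢ = dim Cᵢ` and every `1 ≤ r ≤ k₁ − k₂`,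
`(n − k₂) · (M_{R,r}(C₁,C₂) − m(r−1) − 1) ≤ m(n − k₁)`. -/
theorem stmt12 (q m n k₁ k₂ r : ℕ) (Fq Fqm : Type) [Field Fq] [Field Fqm] [Algebra Fq Fqm]
    [Finite Fqm] (hq : Nat.card Fq = q) (hm : finrank Fq Fqm = m) (hmn : m < n)
    (C₁ C₂ : Submodule Fqm (Fin n → Fqm)) (hC : C₂ < C₁)
    (hk₁ : finrank Fqm C₁ = k₁) (hk₂ : finrank Fqm C₂ = k₂)
    (hr1 : 1 ≤ r) (hrk : r ≤ k₁ - k₂) :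
    ((n : ℤ) - (k₂ : ℤ)) * ((MR q m C₁ C₂ r : ℤ) - (m : ℤ) * ((r : ℤ) - 1) - 1)
      ≤ (m : ℤ) * ((n : ℤ) - (k₁ : ℤ)) := by
  subst hq hm hk₁ hk₂
  exact stmt12_general r Fq Fqm C₁ C₂ hC.le hr1 hrk

end RankPaper
end

section
/- (Duality theorem for generalized rank weights.) Let C ⊆ F_{q^m}^n be an F_{q^m}-linear code of dimension k, and write d_r = d_{R,r}(C) for 1 ≤ r ≤ k and d_s^⊥ = d_{R,s}(C^⊥) for 1 ≤ s ≤ n − k. Then {1, 2, ..., n} = {d_1, d_2, ..., d_k} ∪ {n + 1 − d_1^⊥, n + 1 − d_2^⊥, ..., n + 1 − d_{n−k}^⊥}, and this union is disjoint. -/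
open Submodule Module

namespace RankPaper

variable {n : ℕ}

/-!
A subspace is Galois closed iff it is stable under `Gal(F_{q^m}/F_q)`. The stable subspaces contain
the zero subspace, are closed under orthogonal complements, and each proper one extends, by a
standard basis vector, to one of dimension one more; nothing else about them matters.

For a family `𝒱` with these properties let `f_C(d)` be the largest dimension of `C ∩ V` over the
`V ∈ 𝒱` of dimension at most `d`. The weights `d_r` are the least `d` with `r ≤ f_C(d)`, so
`{d_1, …, d_k}` is the set of `d` at which `f_C` jumps. Passing from `V` to `V^⊥` gives
`f_C(d) + (n - k) = d + f_{C^⊥}(n - d)`. As `f_{C^⊥}` is monotone too, `f_C` grows by at most one at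
each step, and `f_C` jumps at `d` exactly when `f_{C^⊥}` does not jump at `n + 1 - d`.
-/

section Jumps

/-- The places in `{1, …, n}` at which `f` increases; `d - 1` is not truncated since `1 ≤ d`. -/
def jumps (n : ℕ) (f : ℕ → ℕ) : Finset ℕ :=
  {d ∈ Finset.Icc 1 n | f (d - 1) < f d}

lemma mem_jumps {f : ℕ → ℕ} {d : ℕ} : d ∈ jumps n f ↔ (1 ≤ d ∧ d ≤ n) ∧ f (d - 1) < f d := by
  simp [jumps]

lemma jumps_subset_Icc (f : ℕ → ℕ) : jumps n f ⊆ Finset.Icc 1 n :=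
  Finset.filter_subset _ _

lemma image_Icc_eq_jumps {f w : ℕ → ℕ} (hf : Monotone f) (hf0 : f 0 = 0)
    (hw : ∀ r ≤ f n, ∀ d, w r ≤ d ↔ r ≤ f d) : (Finset.Icc 1 (f n)).image w = jumps n f := by
  ext d
  simp only [Finset.mem_image, Finset.mem_Icc, mem_jumps]
  constructor
  · rintro ⟨r, ⟨hr1, hrn⟩, rfl⟩
    have hr : r ≤ f (w r) := (hw r hrn _).1 le_rfl
    have hpos : 1 ≤ w r := by
      by_contra! h
      simp only [Nat.lt_one_iff.1 h, hf0] at hr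
      omega
    have hlt : f (w r - 1) < r := not_le.1 fun h ↦ by
      have := (hw r hrn _).2 h
      omega
    exact ⟨⟨hpos, (hw r hrn n).2 hrn⟩, hlt.trans_le hr⟩
  · rintro ⟨⟨hd1, hdn⟩, hjump⟩
    have hle : w (f d) ≤ d := (hw _ (hf hdn) d).2 le_rfl
    have hlt : ¬w (f d) ≤ d - 1 := fun h ↦ hjump.not_ge ((hw _ (hf hdn) _).1 h)
    exact ⟨f d, ⟨by omega, hf hdn⟩, by omega⟩

lemma image_sub_jumps_eq_sdiff {f g : ℕ → ℕ} {c : ℕ}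
    (hfg : ∀ d ≤ n, f d + c = d + g (n - d)) :
    (jumps n g).image (n + 1 - ·) = Finset.Icc 1 n \ jumps n f := by
  have not_jump_iff {d : ℕ} (hd1 : 1 ≤ d) (hdn : d ≤ n) :
      ¬f (d - 1) < f d ↔ g (n + 1 - d - 1) < g (n + 1 - d) := by
    have h := hfg d hdn
    have h' := hfg (d - 1) (by omega)
    rw [show n - (d - 1) = n + 1 - d by omega] at h'
    rw [show n + 1 - d - 1 = n - d by omega]
    omega
  ext d
  simp only [Finset.mem_image, Finset.mem_sdiff, Finset.mem_Icc, mem_jumps, not_and]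
  constructor
  · rintro ⟨e, ⟨⟨he1, hen⟩, hjump⟩, rfl⟩
    refine ⟨by omega, fun _ ↦ (not_jump_iff (by omega) (by omega)).2 ?_⟩
    rwa [Nat.sub_sub_self (by omega)]
  · rintro ⟨⟨hd1, hdn⟩, hjump⟩
    exact ⟨n + 1 - d, ⟨by omega, (not_jump_iff hd1 hdn).1 (hjump ⟨hd1, hdn⟩)⟩, by omega⟩

end Jumps

section Perp

variable {K : Type} [Field K]

lemma mem_perp {L : Submodule K (Fin n → K)} {x : Fin n → K} :
    x ∈ perp L ↔ ∀ y ∈ L, y ⬝ᵥ x = 0 := by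
  simp [perp, dotLin, dotProduct]

lemma perp_eq_orthogonal (L : Submodule K (Fin n → K)) :
    perp L = (Matrix.toBilin' (1 : Matrix (Fin n) (Fin n) K)).orthogonal L := by
  ext x
  simp [mem_perp, LinearMap.BilinForm.mem_orthogonal_iff, Matrix.toBilin'_apply']

lemma finrank_perp_add_finrank (L : Submodule K (Fin n → K)) :
    finrank K (perp L) + finrank K L = n := by
  rw [perp_eq_orthogonal, LinearMap.BilinForm.finrank_orthogonal
    (LinearMap.BilinForm.nondegenerate_toBilin'_of_det_ne_zero' _ (by simp)),
    Nat.sub_add_cancel L.finrank_le, finrank_fin_fun]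

lemma perp_bot : perp (⊥ : Submodule K (Fin n → K)) = ⊤ := by
  ext x
  simp [mem_perp]

lemma perp_sup (L M : Submodule K (Fin n → K)) : perp (L ⊔ M) = perp L ⊓ perp M := by
  ext x
  simp only [mem_inf, mem_perp]
  refine ⟨fun h ↦ ⟨fun y hy ↦ h y (mem_sup_left hy), fun y hy ↦ h y (mem_sup_right hy)⟩, ?_⟩
  rintro ⟨hL, hM⟩ y hy
  obtain ⟨a, ha, b, hb, rfl⟩ := mem_sup.1 hy
  rw [add_dotProduct, hL a ha, hM b hb, add_zero]

lemma perp_perp (L : Submodule K (Fin n → K)) : perp (perp L) = L := by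
  have le_perp_perp : L ≤ perp (perp L) := fun x hx ↦
    mem_perp.2 fun y hy ↦ dotProduct_comm x y ▸ mem_perp.1 hy x hx
  refine (eq_of_le_of_finrank_eq le_perp_perp ?_).symm
  have := finrank_perp_add_finrank L
  have := finrank_perp_add_finrank (perp L)
  omega

lemma finrank_inf_add_finrank_perp (C V : Submodule K (Fin n → K)) :
    finrank K ↥(C ⊓ V) + finrank K (perp C) =
      finrank K V + finrank K ↥(perp C ⊓ perp V) := by
  have hsup := finrank_perp_add_finrank (C ⊔ V)
  have hC := finrank_perp_add_finrank C
  have := finrank_sup_add_finrank_inf_eq C V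
  rw [perp_sup] at hsup
  omega

end Perp

section DualityFamily

variable {K : Type} [Field K]

/-- The properties of a family of test subspaces of `K^n` which make the weights it defines satisfy
Wei's duality. The Galois closed subspaces (rank weights) have them, and so do the coordinate
subspaces (Hamming weights). -/
structure IsDualityFamily (𝒱 : Set (Submodule K (Fin n → K))) : Prop where
  bot_mem : ⊥ ∈ 𝒱
  perp_mem : ∀ V ∈ 𝒱, perp V ∈ 𝒱
  exists_finrank_succ : ∀ V ∈ 𝒱, V ≠ ⊤ → ∃ W ∈ 𝒱, V ≤ W ∧ finrank K W = finrank K V + 1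

/-- The `r`-th generalized weight of `C` with respect to a family `𝒱` of test subspaces. As for
`dR`, the infimum is the junk value `0` when no `V ∈ 𝒱` meets `C` in dimension at least `r`. -/
noncomputable def genWeight (𝒱 : Set (Submodule K (Fin n → K))) (C : Submodule K (Fin n → K))
    (r : ℕ) : ℕ :=
  sInf {d | ∃ V, V ∈ 𝒱 ∧ r ≤ finrank K ↥(C ⊓ V) ∧ d = finrank K V}

/-- The dimension/intersection profile of `C`: the largest dimension of `C ⊓ V` over the `V ∈ 𝒱` of
dimension at most `d`. With "at most" instead of "exactly" it is monotone on all of `ℕ`. -/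
noncomputable def intersectionProfile (𝒱 : Set (Submodule K (Fin n → K)))
    (C : Submodule K (Fin n → K)) (d : ℕ) : ℕ :=
  sSup {x | ∃ V ∈ 𝒱, finrank K V ≤ d ∧ finrank K ↥(C ⊓ V) = x}

variable {𝒱 : Set (Submodule K (Fin n → K))}

lemma le_intersectionProfile_iff (hbot : ⊥ ∈ 𝒱) (C : Submodule K (Fin n → K)) {r d : ℕ} :
    r ≤ intersectionProfile 𝒱 C d ↔
      ∃ V ∈ 𝒱, finrank K V ≤ d ∧ r ≤ finrank K ↥(C ⊓ V) := by
  set dims := {x | ∃ V ∈ 𝒱, finrank K V ≤ d ∧ finrank K ↥(C ⊓ V) = x}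
  have hne : dims.Nonempty := ⟨_, ⊥, hbot, by simp, rfl⟩
  have hbdd : BddAbove dims := by
    refine ⟨finrank K C, ?_⟩
    rintro _ ⟨V, -, -, rfl⟩
    exact finrank_mono inf_le_left
  constructor
  · intro hr
    obtain ⟨V, hV, hVd, hmax⟩ := Nat.sSup_mem hne hbdd
    exact ⟨V, hV, hVd, hr.trans hmax.ge⟩
  · rintro ⟨V, hV, hVd, hr⟩
    exact hr.trans (le_csSup hbdd ⟨V, hV, hVd, rfl⟩)

lemma intersectionProfile_mono (hbot : ⊥ ∈ 𝒱) (C : Submodule K (Fin n → K)) :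
    Monotone (intersectionProfile 𝒱 C) := by
  intro d e hde
  obtain ⟨V, hV, hVd, hmax⟩ := (le_intersectionProfile_iff hbot C).1 le_rfl
  exact (le_intersectionProfile_iff hbot C).2 ⟨V, hV, hVd.trans hde, hmax⟩

lemma intersectionProfile_zero (hbot : ⊥ ∈ 𝒱) (C : Submodule K (Fin n → K)) :
    intersectionProfile 𝒱 C 0 = 0 := by
  obtain ⟨V, -, hV0, hmax⟩ := (le_intersectionProfile_iff hbot C (d := 0)).1 le_rfl
  exact Nat.le_zero.1 (hmax.trans ((finrank_mono inf_le_right).trans hV0))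

lemma genWeight_le_iff (hbot : ⊥ ∈ 𝒱) (htop : ⊤ ∈ 𝒱) {C : Submodule K (Fin n → K)} {r : ℕ}
    (hr : r ≤ finrank K C) (d : ℕ) : genWeight 𝒱 C r ≤ d ↔ r ≤ intersectionProfile 𝒱 C d := by
  rw [le_intersectionProfile_iff hbot, genWeight]
  set dims := {d | ∃ V, V ∈ 𝒱 ∧ r ≤ finrank K ↥(C ⊓ V) ∧ d = finrank K V}
  have hne : dims.Nonempty := ⟨_, ⊤, htop, by rwa [inf_top_eq], rfl⟩
  constructor
  · intro hd
    obtain ⟨V, hV, hrV, hdim⟩ := Nat.sInf_mem hne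
    exact ⟨V, hV, hdim.ge.trans hd, hrV⟩
  · rintro ⟨V, hV, hVd, hrV⟩
    have hmem : finrank K V ∈ dims := ⟨V, hV, hrV, rfl⟩
    exact (Nat.sInf_le hmem).trans hVd

lemma intersectionProfile_self (hbot : ⊥ ∈ 𝒱) (htop : ⊤ ∈ 𝒱) (C : Submodule K (Fin n → K)) :
    intersectionProfile 𝒱 C n = finrank K C := by
  apply le_antisymm
  · obtain ⟨V, -, -, hmax⟩ := (le_intersectionProfile_iff hbot C (d := n)).1 le_rfl
    exact hmax.trans (finrank_mono inf_le_left)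
  · exact (le_intersectionProfile_iff hbot C).2 ⟨⊤, htop, by simp, by rw [inf_top_eq]⟩

lemma image_genWeight_eq_jumps (hbot : ⊥ ∈ 𝒱) (htop : ⊤ ∈ 𝒱) (C : Submodule K (Fin n → K)) :
    (Finset.Icc 1 (finrank K C)).image (genWeight 𝒱 C) = jumps n (intersectionProfile 𝒱 C) := by
  rw [← intersectionProfile_self hbot htop C]
  refine image_Icc_eq_jumps (intersectionProfile_mono hbot C) (intersectionProfile_zero hbot C) ?_
  intro r hr
  exact genWeight_le_iff hbot htop (hr.trans_eq (intersectionProfile_self hbot htop C))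

namespace IsDualityFamily

lemma top_mem (h𝒱 : IsDualityFamily 𝒱) : ⊤ ∈ 𝒱 :=
  perp_bot (K := K) (n := n) ▸ h𝒱.perp_mem ⊥ h𝒱.bot_mem

lemma exists_le_finrank_eq (h𝒱 : IsDualityFamily 𝒱) {V : Submodule K (Fin n → K)} (hV : V ∈ 𝒱)
    {d : ℕ} (hVd : finrank K V ≤ d) (hdn : d ≤ n) : ∃ W ∈ 𝒱, V ≤ W ∧ finrank K W = d := by
  induction d, hVd using Nat.le_induction with
  | base => exact ⟨V, hV, le_rfl, rfl⟩
  | succ d _ ih =>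
    obtain ⟨W, hW, hVW, hWd⟩ := ih (by omega)
    have hW_ne_top : W ≠ ⊤ := by
      rintro rfl
      rw [finrank_top, finrank_fin_fun] at hWd
      omega
    obtain ⟨W', hW', hWW', hW'd⟩ := h𝒱.exists_finrank_succ W hW hW_ne_top
    exact ⟨W', hW', hVW.trans hWW', by omega⟩

lemma intersectionProfile_add_le (h𝒱 : IsDualityFamily 𝒱) (C : Submodule K (Fin n → K)) {d : ℕ}
    (hdn : d ≤ n) :
    intersectionProfile 𝒱 C d + finrank K (perp C) ≤
      d + intersectionProfile 𝒱 (perp C) (n - d) := by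
  obtain ⟨V, hV, hVd, hmax⟩ := (le_intersectionProfile_iff h𝒱.bot_mem C (d := d)).1 le_rfl
  obtain ⟨W, hW, hVW, rfl⟩ := h𝒱.exists_le_finrank_eq hV hVd hdn
  have hperpW : finrank K (perp W) ≤ n - finrank K W := by
    have := finrank_perp_add_finrank W
    omega
  calc
    intersectionProfile 𝒱 C (finrank K W) + finrank K (perp C)
      ≤ finrank K ↥(C ⊓ W) + finrank K (perp C) := by
        gcongr
        exact hmax.trans (finrank_mono (inf_le_inf_left C hVW))
    _ = finrank K W + finrank K ↥(perp C ⊓ perp W) := finrank_inf_add_finrank_perp C W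
    _ ≤ finrank K W + intersectionProfile 𝒱 (perp C) (n - finrank K W) := by
        gcongr
        exact (le_intersectionProfile_iff h𝒱.bot_mem _).2
          ⟨perp W, h𝒱.perp_mem W hW, hperpW, le_rfl⟩

lemma intersectionProfile_add (h𝒱 : IsDualityFamily 𝒱) (C : Submodule K (Fin n → K)) {d : ℕ}
    (hdn : d ≤ n) :
    intersectionProfile 𝒱 C d + finrank K (perp C) =
      d + intersectionProfile 𝒱 (perp C) (n - d) := by
  refine (h𝒱.intersectionProfile_add_le C hdn).antisymm ?_
  have hdual := h𝒱.intersectionProfile_add_le (perp C) (Nat.sub_le n d)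
  rw [perp_perp, Nat.sub_sub_self hdn] at hdual
  have := finrank_perp_add_finrank C
  omega

end IsDualityFamily

end DualityFamily

theorem stmt14_general {K : Type} [Field K] {k : ℕ} {𝒱 : Set (Submodule K (Fin n → K))}
    (h𝒱 : IsDualityFamily 𝒱) (C : Submodule K (Fin n → K)) (hk : finrank K C = k) :
    ((Finset.Icc 1 k).image (fun r => genWeight 𝒱 C r) ∪
        (Finset.Icc 1 (n - k)).image (fun s => n + 1 - genWeight 𝒱 (perp C) s))
      = Finset.Icc 1 n ∧
    Disjoint ((Finset.Icc 1 k).image (fun r => genWeight 𝒱 C r))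
      ((Finset.Icc 1 (n - k)).image (fun s => n + 1 - genWeight 𝒱 (perp C) s)) := by
  subst hk
  have hweights : (Finset.Icc 1 (finrank K C)).image (fun r => genWeight 𝒱 C r) =
      jumps n (intersectionProfile 𝒱 C) :=
    image_genWeight_eq_jumps h𝒱.bot_mem h𝒱.top_mem C
  have hdual_weights : (Finset.Icc 1 (n - finrank K C)).image
      (fun s => n + 1 - genWeight 𝒱 (perp C) s) =
      Finset.Icc 1 n \ jumps n (intersectionProfile 𝒱 C) := by
    rw [← image_sub_jumps_eq_sdiff fun _ ↦ h𝒱.intersectionProfile_add C,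
      ← image_genWeight_eq_jumps h𝒱.bot_mem h𝒱.top_mem, Finset.image_image,
      ← Nat.eq_sub_of_add_eq (finrank_perp_add_finrank C)]
    rfl
  rw [hweights, hdual_weights]
  exact ⟨Finset.union_sdiff_of_subset (jumps_subset_Icc _), Finset.disjoint_sdiff⟩

section StableSubspaces

/-- The subspaces of `K^n` stable under a group acting on `K`, hence coordinatewise on `K^n`, by
field automorphisms. -/
def stableSubspaces (n : ℕ) (G K : Type*) [Group G] [Field K] [MulSemiringAction G K] :
    Set (Submodule K (Fin n → K)) :=
  {V | ∀ g : G, ∀ v ∈ V, g • v ∈ V}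

lemma smul_dotProduct_smul {M R ι : Type*} [Monoid M] [Semiring R] [MulSemiringAction M R]
    [Fintype ι] (g : M) (v w : ι → R) : (g • v) ⬝ᵥ (g • w) = g • (v ⬝ᵥ w) := by
  simp [dotProduct, Finset.smul_sum]

lemma exists_single_notMem {R ι : Type*} [Semiring R] [Finite ι] [DecidableEq ι]
    {V : Submodule R (ι → R)} (hV : V ≠ ⊤) : ∃ i, Pi.single i 1 ∉ V := by
  by_contra! h
  refine hV (eq_top_iff.2 ?_)
  rw [← (Pi.basisFun R ι).span_eq, span_le]
  rintro _ ⟨i, rfl⟩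
  simpa using h i

variable {G : Type*} {K : Type} [Group G] [Field K] [MulSemiringAction G K]

lemma perp_mem_stableSubspaces {V : Submodule K (Fin n → K)} (hV : V ∈ stableSubspaces n G K) :
    perp V ∈ stableSubspaces n G K := by
  intro g x hx
  refine mem_perp.2 fun y hy ↦ ?_
  calc
    y ⬝ᵥ (g • x) = g • ((g⁻¹ • y) ⬝ᵥ x) := by rw [← smul_dotProduct_smul, smul_inv_smul]
    _ = 0 := by rw [mem_perp.1 hx _ (hV g⁻¹ y hy), smul_zero]

lemma sup_span_single_mem_stableSubspaces {V : Submodule K (Fin n → K)}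
    (hV : V ∈ stableSubspaces n G K) (i : Fin n) :
    V ⊔ span K {Pi.single i 1} ∈ stableSubspaces n G K := by
  intro g x hx
  obtain ⟨v, hv, _, hw, rfl⟩ := mem_sup.1 hx
  obtain ⟨c, rfl⟩ := mem_span_singleton.1 hw
  refine mem_sup.2 ⟨g • v, hV g v hv, (g • c) • Pi.single i 1,
    smul_mem _ _ (mem_span_singleton_self _), ?_⟩
  ext j
  by_cases hj : j = i <;> simp [hj]

variable (n G K) in
lemma isDualityFamily_stableSubspaces : IsDualityFamily (stableSubspaces n G K) where
  bot_mem := by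
    rintro g v rfl
    exact smul_zero g
  perp_mem _ := perp_mem_stableSubspaces
  exists_finrank_succ V hV hV_ne_top := by
    obtain ⟨i, hi⟩ := exists_single_notMem hV_ne_top
    exact ⟨V ⊔ span K {Pi.single i 1}, sup_span_single_mem_stableSubspaces hV i, le_sup_left,
      finrank_sup_span_singleton hi⟩

end StableSubspaces

section GaloisClosed

variable {Fq Fqm : Type} [Field Fq] [Field Fqm] [Algebra Fq Fqm] [Finite Fqm]

lemma galClosure_eq_span_smul (D : Submodule Fqm (Fin n → Fqm)) :
    galClosure (Nat.card Fq) (finrank Fq Fqm) D =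
      span Fqm (⋃ g : Gal(Fqm/Fq), (g • ·) '' (D : Set (Fin n → Fqm))) := by
  have : Finite Fq := Finite.of_injective _ (algebraMap Fq Fqm).injective
  have := Fintype.ofFinite Fq
  have frobenius_pow_smul (i : ℕ) (v : Fin n → Fqm) :
      FiniteField.frobeniusAlgEquivOfAlgebraic Fq Fqm ^ i • v = qpowMap (Nat.card Fq) i v := by
    ext j
    simp [qpowMap, AlgEquiv.smul_def, AlgEquiv.coe_pow,
      FiniteField.coe_frobeniusAlgEquivOfAlgebraic_iterate]
  rw [galClosure,
    ← (FiniteField.bijective_frobeniusAlgEquivOfAlgebraic_pow Fq Fqm).surjective.iUnion_comp]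
  congr 1
  ext v
  simp [frobenius_pow_smul, Fin.exists_iff]

lemma galoisClosed_iff_mem_stableSubspaces {V : Submodule Fqm (Fin n → Fqm)} :
    GaloisClosed (Nat.card Fq) (finrank Fq Fqm) V ↔ V ∈ stableSubspaces n Gal(Fqm/Fq) Fqm := by
  rw [GaloisClosed, galClosure_eq_span_smul]
  constructor
  · intro hV g v hv
    rw [← hV]
    exact subset_span (Set.mem_iUnion.2 ⟨g, v, hv, rfl⟩)
  · intro hV
    refine (span_le.2 (Set.iUnion_subset ?_)).antisymm fun v hv ↦
      subset_span (Set.mem_iUnion.2 ⟨1, v, hv, one_smul _ v⟩)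
    rintro g _ ⟨v, hv, rfl⟩
    exact hV g v hv

variable (n Fq Fqm) in
lemma isDualityFamily_galoisClosed :
    IsDualityFamily {V : Submodule Fqm (Fin n → Fqm) |
      GaloisClosed (Nat.card Fq) (finrank Fq Fqm) V} := by
  simp only [galoisClosed_iff_mem_stableSubspaces]
  exact isDualityFamily_stableSubspaces n Gal(Fqm/Fq) Fqm

end GaloisClosed

/-- duality theorem for generalized rank weights:
`{1,…,n}` is the disjoint union of `{d_{R,r}(C) : 1 ≤ r ≤ k}` and
`{n + 1 − d_{R,s}(C^⊥) : 1 ≤ s ≤ n − k}`. -/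
theorem stmt14 (q m n k : ℕ) (Fq Fqm : Type) [Field Fq] [Field Fqm] [Algebra Fq Fqm]
    [Finite Fqm] (hq : Nat.card Fq = q) (hm : finrank Fq Fqm = m)
    (C : Submodule Fqm (Fin n → Fqm)) (hk : finrank Fqm C = k) :
    ((Finset.Icc 1 k).image (fun r => dR q m C r) ∪
        (Finset.Icc 1 (n - k)).image (fun s => n + 1 - dR q m (perp C) s))
      = Finset.Icc 1 n ∧
    Disjoint ((Finset.Icc 1 k).image (fun r => dR q m C r))
      ((Finset.Icc 1 (n - k)).image (fun s => n + 1 - dR q m (perp C) s)) := by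
  subst hq hm
  exact stmt14_general (isDualityFamily_galoisClosed n Fq Fqm) C hk

end RankPaper
end
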